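/- arXiv:1403.0266 — 2 statements merged into one kernel-verified Lean document; each statement's English description precedes it below -/
import Mathlib

section
/- Let D ⊂ ℂ^n be a bounded domain with smooth boundary and F : D → D' a proper holomorphic map admitting a C¹ extension to the closure of D. Then a point x ∈ ∂D satisfies det 𝕁_F(x) = 0 if and only if the differential at x of the restriction of F to the boundary hypersurface ∂D has rank at most 2n−2. Equivalently, { x ∈ ∂D : det 𝕁_F(x) = 0 } = { x ∈ ∂D : rank of d(F|_{∂D})_x ≤ 2n−2 }. -/
/-!
The real differential `L` of the `C¹` extension at a boundary point `x` is complex linear: it is a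
limit of the differentials at points of `D`, which are complex linear because `F` is holomorphic
there (`fderiv_extension_smul_I`). Hence its real rank is even (`finrank_range_eq_two_mul`), so
that `det L = 0` forces `rank L ≤ 2n - 2`, and a fortiori the restriction of `L` to the tangent
space `ker dρ` has rank at most `2n - 2`. Conversely, if `det L ≠ 0` then `L` is injective and maps
the hyperplane `ker dρ`, of dimension `2n - 1`, onto a space of the same dimension.
-/


open Metric Set Filter Topology MeasureTheory

noncomputable section

/-- `ℂⁿ` as a complex Euclidean space. -/
abbrev Cn (n : ℕ) := EuclideanSpace ℂ (Fin n)

/-- Points of the open unit ball `Bⁿ ⊆ ℂⁿ`. -/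
abbrev BallPt (n : ℕ) := ↥(Metric.ball (0 : Cn n) 1)

/-- The pseudoellipsoid `E^n_(p)`. -/
def pseudoEllipsoid (n k : ℕ) (hk : k ≤ n) (p : Fin k → ℕ) : Set (Cn n) :=
  { z | (∑ j : Fin (n - k), ‖z (Fin.castLE (Nat.sub_le n k) j)‖ ^ 2)
      + ∑ i : Fin k, ‖z ⟨n - k + (i : ℕ), by have := i.isLt; omega⟩‖ ^ (2 * p i) < 1 }

/-- The map `φ^(p)`. -/
def phiMap (n k : ℕ) (hk : k ≤ n) (p : Fin k → ℕ) (z : Cn n) : Cn n :=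
  (EuclideanSpace.equiv (Fin n) ℂ).symm fun j =>
    if _h : (j : ℕ) < n - k then z j
    else z j ^ (p ⟨(j : ℕ) - (n - k), by have := j.isLt; omega⟩)

/-- `f : D → Ω` is proper: preimages of compact subsets of `Ω` are compact. -/
def ProperOn (n : ℕ) (f : Cn n → Cn n) (D Ω : Set (Cn n)) : Prop :=
  ∀ K ⊆ Ω, IsCompact K → IsCompact {z ∈ D | f z ∈ K}

/-- Determinant of the complex Jacobian of `f` at `z`. -/
def cDet (n : ℕ) (f : Cn n → Cn n) (z : Cn n) : ℂ :=
  LinearMap.det ((fderiv ℂ f z : Cn n →L[ℂ] Cn n) : Cn n →ₗ[ℂ] Cn n)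

/-- The singular locus `Z_F` of `f` in `D`. -/
def singularSet (n : ℕ) (f : Cn n → Cn n) (D : Set (Cn n)) : Set (Cn n) :=
  {z ∈ D | cDet n f z = 0}

/-- `f : D → Ω` has multiplicity `m`: each fiber over a point outside the
critical value set `f(Z_f)` has cardinality `m`. -/
def HasMultiplicity (n : ℕ) (f : Cn n → Cn n) (D Ω : Set (Cn n)) (m : ℕ) : Prop :=
  ∀ w ∈ Ω \ (f '' singularSet n f D), (D ∩ f ⁻¹' {w}).ncard = m

/-- `f` extends to a `C¹` map on (a neighbourhood of) the closure of `D`. -/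
def HasC1Extension (n : ℕ) (f : Cn n → Cn n) (D : Set (Cn n)) : Prop :=
  ∃ (U : Set (Cn n)) (g : Cn n → Cn n), IsOpen U ∧ closure D ⊆ U ∧
    ContDiffOn ℝ 1 g U ∧ EqOn g f D

/-- Determinant of the real Jacobian `𝕁_f(x)` (ℂⁿ viewed as ℝ²ⁿ). -/
def rDet (n : ℕ) (f : Cn n → Cn n) (x : Cn n) : ℝ :=
  LinearMap.det ((fderiv ℝ f x : Cn n →L[ℝ] Cn n) : Cn n →ₗ[ℝ] Cn n)

/-- Rank of the real Jacobian `𝕁_f(x)`. -/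
def rRank (n : ℕ) (f : Cn n → Cn n) (x : Cn n) : ℕ :=
  Module.finrank ℝ (LinearMap.range ((fderiv ℝ f x : Cn n →L[ℝ] Cn n) : Cn n →ₗ[ℝ] Cn n))

/-- Rank of the complex Jacobian of `f` at `x`. -/
def cRank (n : ℕ) (f : Cn n → Cn n) (x : Cn n) : ℕ :=
  Module.finrank ℂ (LinearMap.range ((fderiv ℂ f x : Cn n →L[ℂ] Cn n) : Cn n →ₗ[ℂ] Cn n))

/-- A permutation of the unit ball which is holomorphic. -/
def IsHoloPerm (n : ℕ) (f : Equiv.Perm (BallPt n)) : Prop :=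
  ∃ g : Cn n → Cn n, DifferentiableOn ℂ g (Metric.ball 0 1) ∧
    ∀ z : BallPt n, g (z : Cn n) = (f z : Cn n)

/-- A holomorphic automorphism of the unit ball. -/
def IsBallAut (n : ℕ) (f : Equiv.Perm (BallPt n)) : Prop :=
  IsHoloPerm n f ∧ IsHoloPerm n f.symm

/-- A finite subgroup of `Aut(Bⁿ)`. -/
def IsFiniteBallAutSubgroup (n : ℕ) (Γ : Subgroup (Equiv.Perm (BallPt n))) : Prop :=
  (Γ : Set (Equiv.Perm (BallPt n))).Finite ∧ ∀ f ∈ Γ, IsHoloPerm n f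

/-- A geodesic hyperplane of `Bⁿ`: the image of `{z_n = 0}` by an automorphism. -/
def IsGeodesicHyperplane (n : ℕ) (hn : 0 < n) (H : Set (BallPt n)) : Prop :=
  ∃ g : Equiv.Perm (BallPt n), IsBallAut n g ∧
    H = g '' {z : BallPt n | (z : Cn n) ⟨n - 1, by omega⟩ = 0}

/-- A reflection of `Bⁿ`: a finite-order automorphism whose fixed point set is a
geodesic hyperplane. -/
def IsReflection (n : ℕ) (hn : 0 < n) (f : Equiv.Perm (BallPt n)) : Prop :=
  IsBallAut n f ∧ IsOfFinOrder f ∧ IsGeodesicHyperplane n hn {z : BallPt n | f z = z}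

/-- `Γ_ref`: the subgroup generated by the reflections contained in `Γ`. -/
def reflSubgroup (n : ℕ) (hn : 0 < n) (Γ : Subgroup (Equiv.Perm (BallPt n))) :
    Subgroup (Equiv.Perm (BallPt n)) :=
  Subgroup.closure {f | f ∈ Γ ∧ IsReflection n hn f}

/-- A ball permutation is represented on the ball by the (unitary) linear isometry `U`. -/
def RepresentsOnBall (n : ℕ) (f : Equiv.Perm (BallPt n)) (U : Cn n ≃ₗᵢ[ℂ] Cn n) : Prop :=
  ∀ z : BallPt n, (f z : Cn n) = U (z : Cn n)

/-- Evaluation of a polynomial in `n` variables at a point of `ℂⁿ`. -/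
def evalAt (n : ℕ) (Q : MvPolynomial (Fin n) ℂ) (z : Cn n) : ℂ :=
  MvPolynomial.eval (fun i => z i) Q

/-- `Q` is invariant under the reflection subgroup `Γ_o,ref = h Γ_ref h⁻¹ ⊆ U(n)`. -/
def IsReflInvariant (n : ℕ) (hn : 0 < n) (Γ : Subgroup (Equiv.Perm (BallPt n)))
    (hmap : Equiv.Perm (BallPt n)) (Q : MvPolynomial (Fin n) ℂ) : Prop :=
  ∀ f ∈ reflSubgroup n hn Γ, ∀ U : Cn n ≃ₗᵢ[ℂ] Cn n,
    RepresentsOnBall n (hmap * f * hmap⁻¹) U →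
      ∀ z : Cn n, evalAt n Q (U z) = evalAt n Q z

/-- The data entering the construction of the Chevalley map `P_Γ` associated with a
finite subgroup `Γ ⊆ Aut(Bⁿ)`: an automorphism `h` carrying a common fixed point `x₀`
of `Γ` to `0` (so that `hΓh⁻¹ ⊆ U(n)`), and a basis `P₁,…,Pₙ` of homogeneous
polynomials for the algebra of `Γ_o,ref`-invariant polynomials. -/
structure ChevalleyData (n : ℕ) (hn : 0 < n) (Γ : Subgroup (Equiv.Perm (BallPt n))) where
  hmap : Equiv.Perm (BallPt n)
  hmap_aut : IsBallAut n hmap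
  x0 : BallPt n
  x0_fixed : ∀ f ∈ Γ, f x0 = x0
  hmap_x0 : (hmap x0 : Cn n) = 0
  conj_unitary : ∀ f ∈ Γ, ∃ U : Cn n ≃ₗᵢ[ℂ] Cn n, RepresentsOnBall n (hmap * f * hmap⁻¹) U
  P : Fin n → MvPolynomial (Fin n) ℂ
  deg : Fin n → ℕ
  homog : ∀ i, (P i).IsHomogeneous (deg i)
  invariant : ∀ i, IsReflInvariant n hn Γ hmap (P i)
  generates : ∀ Q : MvPolynomial (Fin n) ℂ, IsReflInvariant n hn Γ hmap Q →
    ∃ R : MvPolynomial (Fin n) ℂ, Q = MvPolynomial.aeval P R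

/-- The proper holomorphic map `P_Γ = (P₁,…,Pₙ) ∘ h : Bⁿ → ℂⁿ` (extended by `0`
outside the ball). -/
def ChevalleyData.map {n : ℕ} {hn : 0 < n} {Γ : Subgroup (Equiv.Perm (BallPt n))}
    (C : ChevalleyData n hn Γ) : Cn n → Cn n := fun z =>
  letI : Decidable (z ∈ Metric.ball (0 : Cn n) 1) := Classical.dec _
  if hz : z ∈ Metric.ball (0 : Cn n) 1 then
    (EuclideanSpace.equiv (Fin n) ℂ).symm fun i =>
      evalAt n (C.P i) ((C.hmap ⟨z, hz⟩ : BallPt n) : Cn n)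
  else 0

/-- The domain `B^n_Γ = P_Γ(Bⁿ)`. -/
def ChevalleyData.image {n : ℕ} {hn : 0 < n} {Γ : Subgroup (Equiv.Perm (BallPt n))}
    (C : ChevalleyData n hn Γ) : Set (Cn n) :=
  C.map '' Metric.ball 0 1

/-- A biholomorphism from `A` onto `B`. -/
def IsBiholoOn (n : ℕ) (f : Cn n → Cn n) (A B : Set (Cn n)) : Prop :=
  DifferentiableOn ℂ f A ∧ BijOn f A B ∧
    ∃ g : Cn n → Cn n, DifferentiableOn ℂ g B ∧ BijOn g B A ∧ InvOn g f A B

/-- A complex-analytic subvariety `S` of (an open set) `D`: locally the common zero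
set of finitely many holomorphic functions. -/
def IsAnalyticSubvariety {E : Type*} [NormedAddCommGroup E] [NormedSpace ℂ E]
    (D S : Set E) : Prop :=
  S ⊆ D ∧ ∀ x ∈ D, ∃ U : Set E, IsOpen U ∧ x ∈ U ∧ U ⊆ D ∧
    ∃ (N : ℕ) (f : Fin N → E → ℂ), (∀ i, DifferentiableOn ℂ (f i) U) ∧
      S ∩ U = {z ∈ U | ∀ i, f i z = 0}

/-- Two points `y, y'` of `Bⁿ` are `F`-related: they lie in a common set
`φ^(p)(F⁻¹(w))`, `w ∈ Ω`. -/
def FRelated (n k : ℕ) (hk : k ≤ n) (p : Fin k → ℕ) (F : Cn n → Cn n)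
    (E Ω : Set (Cn n)) (y y' : Cn n) : Prop :=
  ∃ w ∈ Ω, y ∈ phiMap n k hk p '' (E ∩ F ⁻¹' {w}) ∧
    y' ∈ phiMap n k hk p '' (E ∩ F ⁻¹' {w})

/-- The correspondence with graph `V ⊆ D × D'` splits at `z₀ ∈ D`. -/
def SplitsAt (n : ℕ) (D D' : Set (Cn n)) (V : Set (Cn n × Cn n)) (z0 : Cn n) : Prop :=
  ∃ U : Set (Cn n), IsOpen U ∧ z0 ∈ U ∧ ∃ (q : ℕ) (g : Fin q → Cn n → Cn n),
    (∀ i, DifferentiableOn ℂ (g i) (U ∩ D) ∧ MapsTo (g i) (U ∩ D) D') ∧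
    ∀ z ∈ U ∩ D, ∀ w ∈ D', ((z, w) ∈ V ↔ ∃ i, g i z = w)

/-- `D` is a bounded domain with smooth boundary: near each boundary point there is a
smooth local defining function with nonvanishing differential. -/
def HasSmoothBoundary (n : ℕ) (D : Set (Cn n)) : Prop :=
  ∀ x ∈ frontier D, ∃ (V : Set (Cn n)) (ρ : Cn n → ℝ), IsOpen V ∧ x ∈ V ∧
    ContDiff ℝ (⊤ : ℕ∞) ρ ∧ (∀ y ∈ V, fderiv ℝ ρ y ≠ 0) ∧
    D ∩ V = {y ∈ V | ρ y < 0} ∧ frontier D ∩ V = {y ∈ V | ρ y = 0}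

end

/-- The complex-linearity of the differential passes from `D` to its closure by continuity. -/
theorem fderiv_extension_smul_I {n : ℕ} {D U : Set (Cn n)} {F G : Cn n → Cn n}
    (hD : IsOpen D) (hF : DifferentiableOn ℂ F D) (hU : IsOpen U) (hUD : closure D ⊆ U)
    (hG : ContDiffOn ℝ 1 G U) (hGF : EqOn G F D) {x : Cn n} (hx : x ∈ closure D) (v : Cn n) :
    fderiv ℝ G x (Complex.I • v) = Complex.I • fderiv ℝ G x v := by
  have hc : ContinuousOn (fderiv ℝ G) (closure D) :=
    (hG.continuousOn_fderiv_of_isOpen hU le_rfl).mono hUD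
  have hEq : EqOn (fun y => fderiv ℝ G y (Complex.I • v))
      (fun y => Complex.I • fderiv ℝ G y v) D := by
    intro y hy
    have hFy : DifferentiableAt ℂ F y := hF.differentiableAt (hD.mem_nhds hy)
    have hGy : G =ᶠ[𝓝 y] F := hGF.eventuallyEq_of_mem (hD.mem_nhds hy)
    simp only [hGy.fderiv_eq, hFy.fderiv_restrictScalars ℝ,
      ContinuousLinearMap.coe_restrictScalars', map_smul]
  exact hEq.of_subset_closure (hc.clm_apply continuousOn_const)
    ((hc.clm_apply continuousOn_const).const_smul Complex.I) subset_closure subset_rfl hx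

/-- A real-linear endomorphism commuting with multiplication by `i` has even rank. -/
theorem finrank_range_eq_two_mul {n : ℕ} (L : Cn n →ₗ[ℝ] Cn n)
    (hL : ∀ v, L (Complex.I • v) = Complex.I • L v) :
    ∃ r, Module.finrank ℝ (LinearMap.range L) = 2 * r := by
  let R : Submodule ℂ (Cn n) :=
    { (LinearMap.range L).toAddSubmonoid with
      smul_mem' := by
        rintro c _ ⟨v, rfl⟩
        refine ⟨c • v, ?_⟩
        have h (w : Cn n) : c • w = c.re • w + c.im • Complex.I • w := by
          conv_lhs => rw [← Complex.re_add_im c, add_smul, mul_smul]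
          simp only [Complex.coe_smul]
        rw [h v, h (L v), map_add, map_smul, map_smul, hL] }
  exact ⟨Module.finrank ℂ R, finrank_real_of_complex R⟩

theorem finrank_real_Cn (n : ℕ) : Module.finrank ℝ (Cn n) = 2 * n := by
  rw [finrank_real_of_complex, finrank_euclideanSpace_fin]

theorem boundary_jacobian_degenerate_iff_tangential_rank_drop
    (n : ℕ) (hn : 0 < n)
    (D D' : Set (Cn n)) (hD : IsOpen D) (hDc : IsConnected D)
    (hDb : Bornology.IsBounded D) (hDsm : HasSmoothBoundary n D)
    (hD' : IsOpen D') (hD'c : IsConnected D')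
    (F : Cn n → Cn n) (hFholo : DifferentiableOn ℂ F D) (hFmaps : MapsTo F D D')
    (hFproper : ProperOn n F D D')
    (U : Set (Cn n)) (G : Cn n → Cn n) (hU : IsOpen U) (hUD : closure D ⊆ U)
    (hG : ContDiffOn ℝ 1 G U) (hGF : EqOn G F D) :
    ∀ x ∈ frontier D,
      (rDet n G x = 0 ↔
        ∀ (V : Set (Cn n)) (ρ : Cn n → ℝ), IsOpen V → x ∈ V → ContDiff ℝ (⊤ : ℕ∞) ρ →
          (∀ y ∈ V, fderiv ℝ ρ y ≠ 0) → D ∩ V = {y ∈ V | ρ y < 0} →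
          frontier D ∩ V = {y ∈ V | ρ y = 0} →
          Module.finrank ℝ
            (Submodule.map ((fderiv ℝ G x : Cn n →L[ℝ] Cn n) : Cn n →ₗ[ℝ] Cn n)
              (LinearMap.ker ((fderiv ℝ ρ x : Cn n →L[ℝ] ℝ) : Cn n →ₗ[ℝ] ℝ)))
            ≤ 2 * n - 2) := by
  intro x hx
  have hLI := fderiv_extension_smul_I hD hFholo hU hUD hG hGF (frontier_subset_closure hx)
  unfold rDet
  set L : Cn n →ₗ[ℝ] Cn n := ((fderiv ℝ G x : Cn n →L[ℝ] Cn n) : Cn n →ₗ[ℝ] Cn n)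
  constructor
  · intro hdet V ρ _ _ _ _ _ _
    obtain ⟨r, hr⟩ := finrank_range_eq_two_mul L hLI
    have hle := Submodule.finrank_mono (LinearMap.map_le_range (f := L)
      (p := LinearMap.ker ((fderiv ℝ ρ x : Cn n →L[ℝ] ℝ) : Cn n →ₗ[ℝ] ℝ)))
    have hlt : Module.finrank ℝ (LinearMap.range L) < Module.finrank ℝ (Cn n) :=
      Submodule.finrank_lt (LinearMap.range_lt_top_of_det_eq_zero hdet).ne
    rw [finrank_real_Cn] at hlt
    omega
  · intro h
    by_contra hdet
    obtain ⟨V, ρ, hV, hxV, hρ, hρ', hDV, hfV⟩ := hDsm x hx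
    have hle := h V ρ hV hxV hρ hρ' hDV hfV
    have hinj : Function.Injective L := LinearMap.ker_eq_bot.mp (by
      by_contra hker
      exact hdet (LinearMap.det_eq_zero_iff_ker_ne_bot.mpr hker))
    rw [← (Submodule.equivMapOfInjective L hinj _).finrank_eq] at hle
    have hker := Module.Dual.finrank_ker_add_one_of_ne_zero
      (f := ((fderiv ℝ ρ x : Cn n →L[ℝ] ℝ) : Cn n →ₗ[ℝ] ℝ))
      (fun h0 => hρ' x hxV (ContinuousLinearMap.coe_injective h0))
    rw [finrank_real_Cn] at hker
    omega
end

section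
/- Let F : E^n_(p) → Ω ⊆ ℂ^n be a proper holomorphic map. Then the F-relatedness relation is closed in B^n × B^n: if {y_k} and {y'_k} are sequences in B^n with y_k and y'_k F-related for every k, y_k → y ∈ B^n and y'_k → y' ∈ B^n, then y and y' are F-related. -/
/-!
The pseudoellipsoid is the preimage of the unit ball under `φ^(p)`, and it is contained in the
compact polydisc `{‖z i‖ ≤ 1}`. Choose points `z j`, `z' j` of the pseudoellipsoid lying over
`y j`, `y' j` with `F (z j) = F (z' j)`. By compactness, `(z j, z' j)` converges along a
subsequence to some `(Z, Z')`. Continuity of `φ^(p)` gives `φ^(p) Z = Y` and `φ^(p) Z' = Y'`; as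
`Y` and `Y'` lie in the open ball, `Z` and `Z'` lie in the pseudoellipsoid. Continuity of `F` there
gives `F Z = F Z'`, and this common value witnesses that `Y` and `Y'` are `F`-related.
-/

open Metric Set Filter Topology MeasureTheory

lemma phiMap_apply (n k : ℕ) (hk : k ≤ n) (p : Fin k → ℕ) (z : Cn n) (j : Fin n) :
    phiMap n k hk p z j = if _h : (j : ℕ) < n - k then z j
      else z j ^ (p ⟨(j : ℕ) - (n - k), by have := j.isLt; omega⟩) := rfl

lemma continuous_phiMap (n k : ℕ) (hk : k ≤ n) (p : Fin k → ℕ) :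
    Continuous (phiMap n k hk p) := by
  unfold phiMap
  refine (EuclideanSpace.equiv (Fin n) ℂ).symm.continuous.comp (continuous_pi fun j => ?_)
  split_ifs <;> fun_prop

lemma norm_phiMap_sq (n k : ℕ) (hk : k ≤ n) (p : Fin k → ℕ) (z : Cn n) :
    ‖phiMap n k hk p z‖ ^ 2 =
      (∑ j : Fin (n - k), ‖z (Fin.castLE (Nat.sub_le n k) j)‖ ^ 2)
      + ∑ i : Fin k, ‖z ⟨n - k + (i : ℕ), by have := i.isLt; omega⟩‖ ^ (2 * p i) := by
  rw [EuclideanSpace.norm_sq_eq,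
    ← (finCongr (Nat.sub_add_cancel hk)).sum_comp, Fin.sum_univ_add]
  congr 1
  · refine Finset.sum_congr rfl fun j _ => ?_
    rw [phiMap_apply, dif_pos (by simp)]
    rfl
  · refine Finset.sum_congr rfl fun i _ => ?_
    rw [phiMap_apply, dif_neg (by simp), norm_pow, ← pow_mul, mul_comm]
    have : (⟨((finCongr (Nat.sub_add_cancel hk) (Fin.natAdd (n - k) i) : Fin n) : ℕ) - (n - k),
        by simp⟩ : Fin k) = i := by
      ext; simp
    rw [this]
    rfl

lemma mem_pseudoEllipsoid_iff (n k : ℕ) (hk : k ≤ n) (p : Fin k → ℕ) (z : Cn n) :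
    z ∈ pseudoEllipsoid n k hk p ↔ phiMap n k hk p z ∈ Metric.ball (0 : Cn n) 1 := by
  rw [mem_ball_zero_iff, ← sq_lt_one_iff₀ (norm_nonneg _), norm_phiMap_sq]
  rfl

lemma norm_apply_le_one_of_mem (n k : ℕ) (hk : k ≤ n) (p : Fin k → ℕ) (hp : ∀ i, 2 ≤ p i)
    {z : Cn n} (hz : z ∈ pseudoEllipsoid n k hk p) (j : Fin n) : ‖z j‖ ≤ 1 := by
  rw [mem_pseudoEllipsoid_iff, mem_ball_zero_iff] at hz
  have h := (PiLp.norm_apply_le (phiMap n k hk p z) j).trans hz.le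
  rw [phiMap_apply] at h
  split_ifs at h with hj
  · exact h
  · rw [norm_pow] at h
    refine (pow_le_one_iff_of_nonneg (norm_nonneg _) ?_).1 h
    have := hp ⟨(j : ℕ) - (n - k), by have := j.isLt; omega⟩
    omega

lemma isCompact_polydisc (n : ℕ) : IsCompact {z : Cn n | ∀ j, ‖z j‖ ≤ 1} := by
  have h : IsCompact (Set.univ.pi fun _ : Fin n => Metric.closedBall (0 : ℂ) 1) :=
    isCompact_univ_pi fun _ => isCompact_closedBall _ _
  convert (EuclideanSpace.equiv (Fin n) ℂ).toHomeomorph.isCompact_preimage.2 h using 1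
  ext z
  simp [Set.mem_pi]

theorem Frelated_closed
    (n k : ℕ) (hk0 : 0 < k) (hk : k ≤ n)
    (p : Fin k → ℕ) (hp : ∀ i, 2 ≤ p i)
    (F : Cn n → Cn n) (Ω : Set (Cn n)) (hΩ : IsOpen Ω) (hΩc : IsConnected Ω)
    (hFholo : DifferentiableOn ℂ F (pseudoEllipsoid n k hk p))
    (hFmaps : MapsTo F (pseudoEllipsoid n k hk p) Ω)
    (hFproper : ProperOn n F (pseudoEllipsoid n k hk p) Ω)
    (y y' : ℕ → Cn n) (Y Y' : Cn n)
    (hyB : ∀ j, y j ∈ Metric.ball (0 : Cn n) 1)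
    (hy'B : ∀ j, y' j ∈ Metric.ball (0 : Cn n) 1)
    (hrel : ∀ j, FRelated n k hk p F (pseudoEllipsoid n k hk p) Ω (y j) (y' j))
    (hY : Y ∈ Metric.ball (0 : Cn n) 1) (hY' : Y' ∈ Metric.ball (0 : Cn n) 1)
    (hyc : Tendsto y atTop (nhds Y)) (hy'c : Tendsto y' atTop (nhds Y')) :
    FRelated n k hk p F (pseudoEllipsoid n k hk p) Ω Y Y' := by
  choose w hw hz hz' using hrel
  choose z hzE hzy using hz
  choose z' hzE' hzy' using hz'
  obtain ⟨⟨Z, Z'⟩, -, ψ, hψ, hlim⟩ :=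
    ((isCompact_polydisc n).prod (isCompact_polydisc n)).tendsto_subseq
      (x := fun j => (z j, z' j))
      fun j => ⟨norm_apply_le_one_of_mem n k hk p hp (hzE j).1,
        norm_apply_le_one_of_mem n k hk p hp (hzE' j).1⟩
  have hZ : Tendsto (z ∘ ψ) atTop (𝓝 Z) := (continuous_fst.tendsto _).comp hlim
  have hZ' : Tendsto (z' ∘ ψ) atTop (𝓝 Z') := (continuous_snd.tendsto _).comp hlim
  have hφ : phiMap n k hk p Z = Y := by
    refine tendsto_nhds_unique (((continuous_phiMap n k hk p).tendsto Z).comp hZ) ?_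
    exact (hyc.comp hψ.tendsto_atTop).congr fun j => (hzy (ψ j)).symm
  have hφ' : phiMap n k hk p Z' = Y' := by
    refine tendsto_nhds_unique (((continuous_phiMap n k hk p).tendsto Z').comp hZ') ?_
    exact (hy'c.comp hψ.tendsto_atTop).congr fun j => (hzy' (ψ j)).symm
  have hZE : Z ∈ pseudoEllipsoid n k hk p :=
    (mem_pseudoEllipsoid_iff n k hk p Z).2 (hφ ▸ hY)
  have hZE' : Z' ∈ pseudoEllipsoid n k hk p :=
    (mem_pseudoEllipsoid_iff n k hk p Z').2 (hφ' ▸ hY')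
  have hFZ : Tendsto (fun j => F (z (ψ j))) atTop (𝓝 (F Z)) :=
    (hFholo.continuousOn Z hZE).tendsto.comp
      (tendsto_nhdsWithin_iff.2 ⟨hZ, .of_forall fun j => (hzE (ψ j)).1⟩)
  have hFZ' : Tendsto (fun j => F (z' (ψ j))) atTop (𝓝 (F Z')) :=
    (hFholo.continuousOn Z' hZE').tendsto.comp
      (tendsto_nhdsWithin_iff.2 ⟨hZ', .of_forall fun j => (hzE' (ψ j)).1⟩)
  have hEq : F Z' = F Z :=
    tendsto_nhds_unique hFZ' (hFZ.congr fun j => (hzE (ψ j)).2.trans (hzE' (ψ j)).2.symm)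
  exact ⟨F Z, hFmaps hZE, ⟨Z, ⟨hZE, rfl⟩, hφ⟩, ⟨Z', ⟨hZE', hEq⟩, hφ'⟩⟩
end
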